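/- Let X be a second countable locally compact Hausdorff space. For a closed set F ⊆ X let I(F) denote the closed two-sided ideal of C₀(X, ℂ) consisting of the functions vanishing at every point of F. Let F and F_n (n ∈ ℕ) be closed subsets of X, and suppose that the sequence (I(F_n)) converges to I(F) in the ideal topology in the following sense: for every closed two-sided ideal J of C₀(X, ℂ) with J ⊄ I(F), there exists N such that J ⊄ I(F_n) for all n ≥ N. Then for every x ∈ F there exist a strictly increasing sequence of indices (n_k) and points x_k ∈ F_{n_k} such that x_k → x in X. -/

import Mathlib

/-!
The ideals `J_U` of functions vanishing off an open set `U` are closed, and `J_U ⊆ I(G)` fails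
exactly when `U` meets the closed set `G`: a function in `J_U` that is nonzero at a point of `G`
forces that point into `U`, and Urysohn's lemma gives the converse. Applied to neighbourhoods `U`
of `x ∈ F`, the convergence hypothesis therefore says that `U` meets `F_n` for all large `n`.
A countable decreasing neighbourhood basis at `x` and a choice of indices give the sequence.
-/

open ZeroAtInfty Filter

/-- The ideal of `C₀(X, ℂ)` of functions vanishing at every point of `G`. -/
noncomputable def vanishingIdeal {X : Type*} [TopologicalSpace X] (G : Set X) :
    TwoSidedIdeal C₀(X, ℂ) :=
  TwoSidedIdeal.mk' {f | ∀ y ∈ G, f y = 0}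
    (fun _ _ => rfl)
    (fun hf hg y hy => by simp [hf y hy, hg y hy])
    (fun hf y hy => by simp [hf y hy])
    (fun hg y hy => by simp [hg y hy])
    (fun hf y hy => by simp [hf y hy])

theorem mem_vanishingIdeal {X : Type*} [TopologicalSpace X] {G : Set X} {f : C₀(X, ℂ)} :
    f ∈ vanishingIdeal G ↔ ∀ y ∈ G, f y = 0 :=
  TwoSidedIdeal.mem_mk' _ _ _ _ _ _ _

theorem isClosed_vanishingIdeal {X : Type*} [TopologicalSpace X] (G : Set X) :
    IsClosed (vanishingIdeal G : Set C₀(X, ℂ)) := by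
  have h : (vanishingIdeal G : Set C₀(X, ℂ)) = ⋂ y ∈ G, {f : C₀(X, ℂ) | f y = 0} := by
    ext f
    simp [mem_vanishingIdeal]
  rw [h]
  refine isClosed_biInter fun y _ => isClosed_eq ?_ continuous_const
  exact (BoundedContinuousFunction.lipschitz_eval_const (β := ℂ) y |>.continuous).comp
    ZeroAtInftyContinuousMap.isometry_toBCF.continuous

/-- Urysohn's lemma in `C₀(X, ℂ)`, for a point and an open neighbourhood of it. -/
theorem exists_mem_vanishingIdeal_compl {X : Type*} [TopologicalSpace X]
    [LocallyCompactSpace X] [T2Space X] {U : Set X} (hU : IsOpen U) {x : X} (hx : x ∈ U) :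
    ∃ f ∈ vanishingIdeal Uᶜ, f x = 1 := by
  obtain ⟨g, hg1, hg0, hgc, -⟩ := exists_continuous_one_zero_of_isCompact
    (isCompact_singleton (x := x)) hU.isClosed_compl (by simpa using hx)
  have hc : HasCompactSupport fun y => (g y : ℂ) :=
    hgc.comp_left (g := fun r : ℝ => (r : ℂ)) Complex.ofReal_zero
  refine ⟨⟨⟨fun y => (g y : ℂ), by fun_prop⟩, hc.is_zero_at_infty⟩,
    mem_vanishingIdeal.2 fun y hy => ?_, ?_⟩
  · change (g y : ℂ) = 0
    simp [hg0 hy]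
  · change (g x : ℂ) = 1
    simp [hg1 (Set.mem_singleton x)]

/-- If `I(F_n) → I(F)` in the ideal topology on closed two-sided ideals of
`C₀(X, ℂ)` (unfolded: for every closed two-sided ideal `J` with `J ⊄ I(F)`,
eventually `J ⊄ I(F_n)`), then every `x ∈ F` is the limit of points
`x_k ∈ F_{n_k}` along a subsequence. -/
theorem stmt_2 {X : Type*} [TopologicalSpace X] [SecondCountableTopology X]
    [LocallyCompactSpace X] [T2Space X]
    (F : Set X) (hF : IsClosed F) (Fn : ℕ → Set X) (hFn : ∀ n, IsClosed (Fn n))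
    (hconv : ∀ J : TwoSidedIdeal C₀(X, ℂ), IsClosed (J : Set C₀(X, ℂ)) →
      ¬ (∀ f ∈ J, ∀ x ∈ F, f x = 0) →
      ∃ N : ℕ, ∀ n ≥ N, ¬ (∀ f ∈ J, ∀ x ∈ Fn n, f x = 0))
    (x : X) (hx : x ∈ F) :
    ∃ n : ℕ → ℕ, StrictMono n ∧ ∃ xk : ℕ → X,
      (∀ k, xk k ∈ Fn (n k)) ∧ Tendsto xk atTop (nhds x) := by
  have key : ∀ U : Set X, IsOpen U → x ∈ U → ∀ᶠ n in atTop, (Fn n ∩ U).Nonempty := by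
    intro U hU hxU
    obtain ⟨N, hN⟩ := hconv (vanishingIdeal Uᶜ) (isClosed_vanishingIdeal _) (by
      obtain ⟨f, hf, hfx⟩ := exists_mem_vanishingIdeal_compl hU hxU
      intro h
      exact one_ne_zero (hfx.symm.trans (h f hf x hx)))
    filter_upwards [eventually_ge_atTop N] with n hn
    by_contra hne
    exact hN n hn fun f hf y hy => mem_vanishingIdeal.1 hf y fun hyU => hne ⟨y, hy, hyU⟩
  obtain ⟨B, hB⟩ := (nhds x).exists_antitone_basis
  have hmeet : ∀ k, ∀ᶠ n in atTop, (Fn n ∩ B k).Nonempty := fun k => by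
    obtain ⟨U, hUB, hU, hxU⟩ := mem_nhds_iff.1 (hB.mem k)
    exact (key U hU hxU).mono fun n hn => hn.mono (Set.inter_subset_inter_right _ hUB)
  obtain ⟨n, hn, hne⟩ := extraction_forall_of_eventually hmeet
  choose xk hxk using hne
  exact ⟨n, hn, xk, fun k => (hxk k).1, hB.tendsto fun k => (hxk k).2⟩
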